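/- Assume: (O1) a_{ij}(ω) ≥ 0 for all i ≠ j and all ω; (O2) ω ↦ max_{i,j} a_{ij}(ω) ∈ L₁(ℙ); and the strong positivity condition: there exist ē ∈ X⁺ with ‖ē‖ = 1 and a measurable ν : Ω → (0, ∞) with ω ↦ ln⁻ν(ω) in L₁(ℙ) such that U_ω(1)ē ≥ ν(ω)·ē componentwise for every ω ∈ Ω. Then the generalized principal Lyapunov exponent is finite; equivalently, the ℙ-almost-sure constant limit λ̃₁ := lim_{t→∞} (1/t) ln‖U_ω(t)‖ (which exists in [−∞, ∞)) satisfies λ̃₁ > −∞. -/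

import Mathlib

open MeasureTheory Matrix Filter

/-- `ln⁻ x = max (−ln x) 0`. -/
noncomputable def lnminus (x : ℝ) : ℝ := max (-Real.log x) 0

/-- The Euclidean norm on `Fin N → ℝ`. -/
noncomputable def enorm' {N : ℕ} (u : Fin N → ℝ) : ℝ := Real.sqrt (∑ i, (u i) ^ 2)

/-- The operator norm of a matrix with respect to the Euclidean norm. -/
noncomputable def eopNorm {N : ℕ} (M : Matrix (Fin N) (Fin N) ℝ) : ℝ :=
  sSup {c : ℝ | ∃ u : Fin N → ℝ, enorm' u ≤ 1 ∧ c = enorm' (M.mulVec u)}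


/-- Tiling inequality. -/
lemma kk_tile {Ω : Type*} (T : Ω → Ω) (Z : ℕ → Ω → ℝ)
    (hneg : ∀ n ω, Z n ω ≤ 0)
    (hsub : ∀ n m ω, Z (n + m) ω ≤ Z n ω + Z m (T^[n] ω))
    (c : ℝ) (hc : c < 0) (N : ℕ) (B : Set Ω)
    (hB : ∀ ω, ω ∉ B → ∃ n, 1 ≤ n ∧ n ≤ N ∧ Z n ω ≤ n * c) (K : ℕ) :
    ∀ ω, Z K ω ≤ c * (K - N - ∑ k ∈ Finset.range K, B.indicator (fun _ => (1:ℝ)) (T^[k] ω)) := by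
  induction K using Nat.strong_induction_on with
  | _ K ih =>
    intro ω
    have hnn : ∀ (s : Finset ℕ) (x : Ω), 0 ≤ ∑ k ∈ s, B.indicator (fun _ => (1:ℝ)) (T^[k] x) :=
      fun s x => Finset.sum_nonneg fun k _ => Set.indicator_nonneg (fun _ _ => zero_le_one) _
    by_cases hK : K ≤ N
    · have h1 : (K:ℝ) ≤ N := by exact_mod_cast hK
      have := hnn (Finset.range K) ω
      exact (hneg K ω).trans (mul_nonneg_of_nonpos_of_nonpos hc.le (by linarith))
    · push Not at hK
      by_cases hω : ω ∈ B
      · obtain ⟨J, rfl⟩ : ∃ J, K = 1 + J := ⟨K - 1, by omega⟩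
        have h1 := hsub 1 J ω
        have h2 := ih J (by omega) (T^[1] ω)
        have h3 := hneg 1 ω
        have h4 : ∑ k ∈ Finset.range (1 + J), B.indicator (fun _ => (1:ℝ)) (T^[k] ω)
            = 1 + ∑ k ∈ Finset.range J, B.indicator (fun _ => (1:ℝ)) (T^[k] (T^[1] ω)) := by
          rw [add_comm 1 J, Finset.sum_range_succ', add_comm]
          congr 1
          · simp [hω]
        rw [h4]; push_cast
        have : c * (1 + (J:ℝ) - N - (1 + ∑ k ∈ Finset.range J, B.indicator (fun _ => (1:ℝ)) (T^[k] (T^[1] ω)))) = c * (J - N - ∑ k ∈ Finset.range J, B.indicator (fun _ => (1:ℝ)) (T^[k] (T^[1] ω))) := by ring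
        linarith
      · obtain ⟨n, hn1, hnN, hn⟩ := hB ω hω
        obtain ⟨J, rfl⟩ : ∃ J, K = n + J := ⟨K - n, by omega⟩
        have h1 := hsub n J ω
        have h2 := ih J (by omega) (T^[n] ω)
        have h4 : ∑ k ∈ Finset.range (n + J), B.indicator (fun _ => (1:ℝ)) (T^[k] ω)
            = ∑ k ∈ Finset.range n, B.indicator (fun _ => (1:ℝ)) (T^[k] ω) + ∑ k ∈ Finset.range J, B.indicator (fun _ => (1:ℝ)) (T^[k] (T^[n] ω)) := by
          rw [Finset.sum_range_add]
          congr 1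
          refine Finset.sum_congr rfl fun k _ => ?_
          rw [add_comm n k, Function.iterate_add_apply]
        rw [h4]; push_cast
        have := hnn (Finset.range n) ω
        nlinarith

/-- Maximal-type lemma. -/
lemma kk_max {Ω : Type*} [MeasurableSpace Ω] (ℙ : Measure Ω) [IsProbabilityMeasure ℙ]
    (T : Ω → Ω) (hT : MeasurePreserving T ℙ ℙ) (Z : ℕ → Ω → ℝ)
    (hneg : ∀ n ω, Z n ω ≤ 0)
    (hsub : ∀ n m ω, Z (n + m) ω ≤ Z n ω + Z m (T^[n] ω))
    (hmeas : ∀ n, Measurable (Z n)) (hZint : ∀ n, Integrable (Z n) ℙ)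
    (c : ℝ) (hc : ∀ᵐ ω ∂ℙ, ∃ n, 1 ≤ n ∧ Z n ω ≤ n * c) (δ : ℝ) (hδ : 0 < δ) :
    ∃ K : ℕ, 1 ≤ K ∧ ∫ ω, Z K ω ∂ℙ ≤ K * (c + δ) := by
  by_cases hc0 : 0 ≤ c
  · refine ⟨1, le_rfl, ?_⟩
    have : ∫ ω, Z 1 ω ∂ℙ ≤ 0 := integral_nonpos (hneg 1)
    push_cast; linarith
  push Not at hc0
  set B : ℕ → Set Ω := fun N => {ω | ∀ n, 1 ≤ n → n ≤ N → n * c < Z n ω} with hBdef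
  have hBm : ∀ N, MeasurableSet (B N) := by
    intro N
    have : B N = ⋂ n : ℕ, ⋂ (_ : 1 ≤ n), ⋂ (_ : n ≤ N), {ω | n * c < Z n ω} := by
      ext ω; simp [hBdef]
    rw [this]
    exact MeasurableSet.iInter fun n => MeasurableSet.iInter fun _ => MeasurableSet.iInter fun _ =>
      measurableSet_lt measurable_const (hmeas n)
  have hanti : Antitone B := fun a b hab ω h n h1 h2 => h n h1 (h2.trans hab)
  have hzero : ℙ (⋂ N, B N) = 0 := by
    refine measure_mono_null ?_ hc
    intro ω h
    simp only [Set.mem_iInter, Set.mem_compl_iff, Set.mem_ofPred_eq] at h ⊢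
    rintro ⟨n, hn1, hn⟩
    exact absurd hn (not_le.2 (h n n hn1 le_rfl))
  have htend := tendsto_measure_iInter_atTop (μ := ℙ) (s := B) (fun N => (hBm N).nullMeasurableSet)
    hanti ⟨0, measure_ne_top _ _⟩
  rw [hzero] at htend
  have htend' : Tendsto (fun N => ℙ.real (B N)) atTop (nhds 0) := by
    have := (ENNReal.tendsto_toReal ENNReal.zero_ne_top).comp htend
    simpa [Measure.real, Function.comp_def] using this
  have hev : ∀ᶠ N in atTop, ℙ.real (B N) < δ / (2 * (-c)) :=
    htend'.eventually_lt_const (by apply div_pos hδ; linarith)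
  obtain ⟨N, hN⟩ := hev.exists
  obtain ⟨K, hK⟩ := exists_nat_gt (N * (2 * (-c)) / δ + 1)
  have hK0 : (0:ℝ) ≤ N * (2 * (-c)) / δ := by
    apply div_nonneg _ hδ.le
    apply mul_nonneg (Nat.cast_nonneg _); linarith
  refine ⟨K, by have : (1:ℝ) < K := by linarith
                exact_mod_cast this.le, ?_⟩
  have hpt := kk_tile T Z hneg hsub c hc0 N (B N) (by
    intro ω hω
    simp only [hBdef, Set.mem_ofPred_eq] at hω
    push Not at hω
    obtain ⟨n, h1, h2, h3⟩ := hω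
    exact ⟨n, h1, h2, h3⟩) K
  have hindint : ∀ k, Integrable (fun ω => (B N).indicator (fun _ => (1:ℝ)) (T^[k] ω)) ℙ := by
    intro k
    exact ((hT.iterate k).integrable_comp ((measurable_const.indicator (hBm N)).aestronglyMeasurable)).2
      ((integrable_const (1:ℝ)).indicator (hBm N))
  have hindval : ∀ k, ∫ ω, (B N).indicator (fun _ => (1:ℝ)) (T^[k] ω) ∂ℙ = ℙ.real (B N) := by
    intro k
    have h1 := integral_map (μ := ℙ) (φ := T^[k]) (hT.iterate k).measurable.aemeasurable
      (f := (B N).indicator (fun _ => (1:ℝ)))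
      ((measurable_const.indicator (hBm N)).aestronglyMeasurable)
    rw [(hT.iterate k).map_eq] at h1
    rw [← h1, integral_indicator (hBm N)]; simp
  have h2 : ∫ ω, Z K ω ∂ℙ ≤ ∫ ω, c * (K - N - ∑ k ∈ Finset.range K, (B N).indicator (fun _ => (1:ℝ)) (T^[k] ω)) ∂ℙ := by
    refine integral_mono (hZint K) ?_ hpt
    exact ((integrable_const _).sub (integrable_finsetSum _ fun k _ => hindint k)).const_mul c
  have h3 : ∫ ω, c * (K - N - ∑ k ∈ Finset.range K, (B N).indicator (fun _ => (1:ℝ)) (T^[k] ω)) ∂ℙ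
      = c * (K - N - K * ℙ.real (B N)) := by
    rw [integral_const_mul, integral_sub (integrable_const _) (integrable_finsetSum _ fun k _ => hindint k),
      integral_finsetSum _ fun k _ => hindint k]
    simp [hindval]
  rw [h3] at h2
  refine h2.trans ?_
  have h4 : (-c) * ℙ.real (B N) ≤ δ / 2 := by
    rw [lt_div_iff₀ (by linarith)] at hN; linarith
  have h5 : (-c) * N ≤ K * (δ / 2) := by
    have : N * (2 * (-c)) / δ < K := by linarith
    rw [div_lt_iff₀ hδ] at this; linarith
  nlinarith [(Nat.cast_nonneg K : (0:ℝ) ≤ K)]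

/-- Additive version. -/
lemma kk_add {Ω : Type*} [MeasurableSpace Ω] (ℙ : Measure Ω) [IsProbabilityMeasure ℙ]
    (T : Ω → Ω) (hT : MeasurePreserving T ℙ ℙ) (h : Ω → ℝ)
    (hnn : ∀ ω, 0 ≤ h ω) (hmeas : Measurable h) (hZint : Integrable h ℙ)
    (a : ℝ) (ha : ∀ᵐ ω ∂ℙ, ∃ n : ℕ, 1 ≤ n ∧ ∑ k ∈ Finset.range n, h (T^[k] ω) ≤ n * a) :
    ∫ ω, h ω ∂ℙ ≤ a := by
  have key : ∀ R : ℕ, ∫ ω, min (h ω) R ∂ℙ ≤ a := by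
    intro R
    refine le_of_forall_pos_le_add fun δ hδ => ?_
    have hmm : Measurable fun ω => min (h ω) (R:ℝ) := hmeas.min measurable_const
    have hii : Integrable (fun ω => min (h ω) (R:ℝ)) ℙ := hZint.inf (integrable_const _)
    have hci : ∀ k, Integrable (fun ω => min (h (T^[k] ω)) (R:ℝ)) ℙ := fun k =>
      ((hT.iterate k).integrable_comp (g := fun ω => min (h ω) (R:ℝ)) hmm.aestronglyMeasurable).2 hii
    obtain ⟨K, hK1, hK⟩ := kk_max ℙ T hT
      (fun n ω => ∑ k ∈ Finset.range n, (min (h (T^[k] ω)) (R:ℝ) - R)) 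
      (fun n ω => Finset.sum_nonpos fun k _ => by simp)
      (fun n m ω => by
        rw [Finset.sum_range_add]
        refine le_of_eq ?_
        congr 1
        refine Finset.sum_congr rfl fun k _ => ?_
        rw [add_comm n k, Function.iterate_add_apply])
      (fun n => Finset.measurable_fun_sum _ fun k _ => (hmm.comp (hT.iterate k).measurable).sub_const _)
      (fun n => integrable_finsetSum _ fun k _ => (hci k).sub (integrable_const _))
      (a - R) (by
        filter_upwards [ha] with ω ⟨n, hn1, hn⟩
        refine ⟨n, hn1, ?_⟩
        have : ∑ k ∈ Finset.range n, min (h (T^[k] ω)) (R:ℝ) ≤ ∑ k ∈ Finset.range n, h (T^[k] ω) :=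
          Finset.sum_le_sum fun k _ => min_le_left _ _
        rw [Finset.sum_sub_distrib]; simp
        linarith) δ hδ
    have hval : ∀ k, ∫ ω, min (h (T^[k] ω)) (R:ℝ) ∂ℙ = ∫ ω, min (h ω) (R:ℝ) ∂ℙ := by
      intro k
      have h1 := integral_map (μ := ℙ) (φ := T^[k]) (hT.iterate k).measurable.aemeasurable
        (f := fun ω => min (h ω) (R:ℝ)) hmm.aestronglyMeasurable
      rw [(hT.iterate k).map_eq] at h1
      exact h1.symm
    have hdi : ∀ k ∈ Finset.range K, Integrable (fun ω => min (h (T^[k] ω)) (R:ℝ) - R) ℙ :=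
      fun k _ => (hci k).sub (integrable_const _)
    rw [integral_finsetSum _ hdi] at hK
    have : ∀ k ∈ Finset.range K, ∫ ω, (min (h (T^[k] ω)) (R:ℝ) - R) ∂ℙ = ∫ ω, min (h ω) (R:ℝ) ∂ℙ - R := by
      intro k _
      rw [integral_sub (hci k) (integrable_const _), hval]; simp
    rw [Finset.sum_congr rfl this] at hK
    simp only [Finset.sum_const, Finset.card_range, nsmul_eq_mul] at hK
    have hKpos : (0:ℝ) < K := by exact_mod_cast hK1
    have := le_of_mul_le_mul_left hK hKpos
    linarith
  have htend : Tendsto (fun R : ℕ => ∫ ω, min (h ω) R ∂ℙ) atTop (nhds (∫ ω, h ω ∂ℙ)) := by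
    refine tendsto_integral_of_dominated_convergence h
      (fun R => (hmeas.min measurable_const).aestronglyMeasurable) hZint ?_ ?_
    · intro R
      refine Eventually.of_forall fun ω => ?_
      rw [Real.norm_of_nonneg (le_min (hnn ω) (Nat.cast_nonneg _))]
      exact min_le_left _ _
    · refine Eventually.of_forall fun ω => ?_
      refine tendsto_const_nhds.congr' ?_
      obtain ⟨R0, hR0⟩ := exists_nat_ge (h ω)
      filter_upwards [eventually_ge_atTop R0] with R hR
      have : (R0:ℝ) ≤ R := by exact_mod_cast hR
      rw [min_eq_left (hR0.trans this)]
  exact le_of_tendsto' htend key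


lemma kk_zero_one {Ω : Type*} [MeasurableSpace Ω] (ℙ : Measure Ω) [IsProbabilityMeasure ℙ]
    (θ : ℝ → Ω → Ω) 
    (hθadd : ∀ s t : ℝ, θ (s + t) = θ s ∘ θ t)
    (hθmp : ∀ t, MeasurePreserving (θ t) ℙ ℙ)
    (hθerg : ∀ F : Set Ω, MeasurableSet F → (∀ t, θ t ⁻¹' F = F) →
      ℙ F = 0 ∨ ℙ F = 1)
    (F : Set Ω) (hF : MeasurableSet F) (hmono : ∀ s, 0 ≤ s → ∀ ω ∈ F, θ s ω ∈ F) :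
    ℙ F = 0 ∨ ℙ F = 1 := by
  have hle : ∀ a b : ℝ, a ≤ b → ∀ ω, θ a ω ∈ F → θ b ω ∈ F := by
    intro a b hab ω h
    have := hmono (b - a) (by linarith) _ h
    have e : θ b = θ (b - a) ∘ θ a := by rw [← hθadd]; congr 1; ring
    rw [e]; exact this
  have hmon : Monotone fun n : ℕ => θ n ⁻¹' F := fun a b hab ω h =>
    hle a b (by exact_mod_cast hab) ω h
  have hmeas : ∀ n : ℕ, MeasurableSet (θ n ⁻¹' F) := fun n => (hθmp n).measurable hF
  have h1 : ℙ (⋃ n : ℕ, θ n ⁻¹' F) = ℙ F := by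
    have := tendsto_measure_iUnion_atTop (μ := ℙ) hmon
    refine tendsto_nhds_unique this ?_
    refine tendsto_const_nhds.congr fun n => ?_
    exact ((hθmp n).measure_preimage hF.nullMeasurableSet).symm
  rw [← h1]
  refine hθerg _ (MeasurableSet.iUnion hmeas) fun t => ?_
  ext ω
  simp only [Set.mem_preimage, Set.mem_iUnion]
  have e : ∀ n : ℕ, θ n (θ t ω) = θ (n + t) ω := fun n => by rw [hθadd]; rfl
  simp only [e]
  constructor
  · rintro ⟨n, hn⟩
    obtain ⟨m, hm⟩ := exists_nat_ge (n + t)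
    exact ⟨m, hle _ _ hm ω hn⟩
  · rintro ⟨n, hn⟩
    obtain ⟨m, hm⟩ := exists_nat_ge (n - t)
    exact ⟨m, hle _ _ (by linarith) ω hn⟩

lemma kk_iter {Ω : Type*} (θ : ℝ → Ω → Ω) (hθ0 : θ 0 = id)
    (hθadd : ∀ s t : ℝ, θ (s + t) = θ s ∘ θ t) (a : ℝ) (k : ℕ) : (θ a)^[k] = θ (k * a) := by
  induction k with
  | zero => simp [hθ0]
  | succ k ih =>
    rw [Function.iterate_succ', ih, ← hθadd]; congr 1; push_cast; ring

theorem kk_flow {Ω : Type*} [MeasurableSpace Ω] (ℙ : Measure Ω) [IsProbabilityMeasure ℙ]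
    (θ : ℝ → Ω → Ω) (hθ0 : θ 0 = id)
    (hθadd : ∀ s t : ℝ, θ (s + t) = θ s ∘ θ t)
    (hθmp : ∀ t, MeasurePreserving (θ t) ℙ ℙ)
    (hθerg : ∀ F : Set Ω, MeasurableSet F → (∀ t, θ t ⁻¹' F = F) →
      ℙ F = 0 ∨ ℙ F = 1)
    (Z : ℝ → Ω → ℝ) (hneg : ∀ t, 0 ≤ t → ∀ ω, Z t ω ≤ 0)
    (hsub : ∀ s t, 0 ≤ s → 0 ≤ t → ∀ ω, Z (s + t) ω ≤ Z s ω + Z t (θ s ω))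
    (hmeas : ∀ n : ℕ, Measurable (Z n)) (hZint : ∀ n : ℕ, Integrable (Z n) ℙ)
    (C : ℝ) (hlow : ∀ n : ℕ, -(n * C) ≤ ∫ ω, Z n ω ∂ℙ) :
    ∃ lam : ℝ, ∀ᵐ ω ∂ℙ, Tendsto (fun t : ℝ => t⁻¹ * Z t ω) atTop (nhds lam) := by
  -- monotonicity in time
  have hanti : ∀ s t, 0 ≤ s → s ≤ t → ∀ ω, Z t ω ≤ Z s ω := by
    intro s t hs hst ω
    have h1 := hsub s (t - s) hs (by linarith) ω
    have h2 := hneg (t - s) (by linarith) (θ s ω)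
    rw [show s + (t - s) = t by ring] at h1
    linarith
  have hshift : ∀ s, 0 ≤ s → ∃ p : ℕ, ∀ n : ℕ, ∀ ω, Z ((n + p : ℕ) : ℝ) ω ≤ Z n (θ s ω) := by
    intro s hs
    obtain ⟨p, hp⟩ := exists_nat_ge s
    refine ⟨p, fun n ω => ?_⟩
    have h0 := hanti (s + n) ((n + p : ℕ) : ℝ) (by positivity) (by push_cast; linarith) ω
    have h1 := hsub s n hs (by positivity) ω
    have h2 := hneg s hs ω
    linarith
  set F : ℝ → Set Ω := fun c => {ω | ∃ M : ℕ, ∃ᶠ n : ℕ in atTop, n * c - M < Z n ω} with hF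
  set G : ℝ → Set Ω := fun c => {ω | ∃ M : ℕ, ∃ᶠ n : ℕ in atTop, Z n ω < n * c + M} with hG
  have hFm : ∀ c, MeasurableSet (F c) := by
    intro c
    have : F c = ⋃ M : ℕ, ⋂ a : ℕ, ⋃ n : ℕ, ⋃ (_ : a ≤ n), {ω | n * c - M < Z n ω} := by
      ext ω; simp [hF, frequently_atTop]
    rw [this]
    exact MeasurableSet.iUnion fun M => MeasurableSet.iInter fun a => MeasurableSet.iUnion fun n =>
      MeasurableSet.iUnion fun _ => measurableSet_lt measurable_const (hmeas n)
  have hGm : ∀ c, MeasurableSet (G c) := by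
    intro c
    have : G c = ⋃ M : ℕ, ⋂ a : ℕ, ⋃ n : ℕ, ⋃ (_ : a ≤ n), {ω | Z n ω < n * c + M} := by
      ext ω; simp [hG, frequently_atTop]
    rw [this]
    exact MeasurableSet.iUnion fun M => MeasurableSet.iInter fun a => MeasurableSet.iUnion fun n =>
      MeasurableSet.iUnion fun _ => measurableSet_lt (hmeas n) measurable_const
  have hF01 : ∀ c, ℙ (F c) = 0 ∨ ℙ (F c) = 1 := by
    intro c
    refine kk_zero_one ℙ θ hθadd hθmp hθerg _ (hFm c) ?_
    rintro s hs ω ⟨M, hM⟩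
    obtain ⟨p, hp⟩ := hshift s hs
    obtain ⟨M', hM'⟩ := exists_nat_ge (M + p * |c|)
    refine ⟨M', ?_⟩
    rw [frequently_atTop] at hM ⊢
    intro a
    obtain ⟨n, hn, h⟩ := hM (a + p)
    obtain ⟨k, rfl⟩ : ∃ k, n = k + p := ⟨n - p, by omega⟩
    refine ⟨k, by omega, ?_⟩
    have h1 := hp k ω
    push_cast at h h1
    have h2 : -(p * |c|) ≤ p * c := by
      have := mul_le_mul_of_nonneg_left (neg_abs_le c) (Nat.cast_nonneg (α := ℝ) p); linarith
    linarith
  have hG01 : ∀ c, ℙ (G c) = 0 ∨ ℙ (G c) = 1 := by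
    intro c
    have := kk_zero_one ℙ θ hθadd hθmp hθerg _ (hGm c).compl ?_
    · rw [prob_compl_eq_zero_iff (hGm c), prob_compl_eq_one_iff (hGm c)] at this
      exact this.symm
    · intro s hs ω hω hω'
      apply hω
      obtain ⟨M, hM⟩ := hω'
      obtain ⟨p, hp⟩ := hshift s hs
      obtain ⟨M', hM'⟩ := exists_nat_ge (M + p * |c|)
      refine ⟨M', ?_⟩
      rw [frequently_atTop] at hM ⊢
      intro a
      obtain ⟨n, hn, h⟩ := hM a
      refine ⟨n + p, by omega, ?_⟩
      have h1 := hp n ω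
      have h2 : -(p * |c|) ≤ p * c := by
        have := mul_le_mul_of_nonneg_left (neg_abs_le c) (Nat.cast_nonneg (α := ℝ) p); linarith
      push_cast at h h1 ⊢
      linarith
  -- claim A
  have hA : ∀ c, ℙ (G c) = 1 → ∀ δ > 0, ∃ K : ℕ, 1 ≤ K ∧ ∫ ω, Z K ω ∂ℙ ≤ K * (c + δ) := by
    intro c hc δ hδ
    have hae : ∀ᵐ ω ∂ℙ, ω ∈ G c := (mem_ae_iff_prob_eq_one (hGm c)).2 hc
    obtain ⟨K, hK1, hK⟩ := kk_max ℙ (θ 1) (hθmp 1) (fun n => Z n) (fun n => hneg n (by positivity))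
      (fun n m ω => by
        rw [kk_iter θ hθ0 hθadd]
        have := hsub n m (by positivity) (by positivity) ω
        push_cast; simpa using this) hmeas hZint (c + δ / 2) (by
        filter_upwards [hae] with ω ⟨M, hM⟩
        rw [frequently_atTop] at hM
        obtain ⟨a, ha⟩ := exists_nat_ge (M / (δ / 2))
        obtain ⟨n, hn, h⟩ := hM (a + 1)
        refine ⟨n, by omega, ?_⟩
        have h1 : (a:ℝ) ≤ n := by exact_mod_cast (by omega : a ≤ n)
        rw [div_le_iff₀ (by positivity)] at ha
        nlinarith) (δ / 2) (by positivity)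
    refine ⟨K, hK1, hK.trans (le_of_eq (by ring))⟩
  have hB : ∀ c, ℙ (F c) = 1 → ∀ m : ℕ, 1 ≤ m → m * c ≤ ∫ ω, Z m ω ∂ℙ := by
    intro c hc m hm
    have hm0 : (0:ℝ) < m := by exact_mod_cast hm
    have hae : ∀ᵐ ω ∂ℙ, ω ∈ F c := (mem_ae_iff_prob_eq_one (hFm c)).2 hc
    have hsum : ∀ (n : ℕ) ω, Z ((n * m : ℕ) : ℝ) ω ≤ ∑ k ∈ Finset.range n, Z m ((θ m)^[k] ω) := by
      intro n
      induction n with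
      | zero => intro ω; simpa using hneg 0 le_rfl ω
      | succ n ih =>
        intro ω
        rw [Finset.sum_range_succ]
        have h1 := hsub ((n * m : ℕ) : ℝ) m (by positivity) (by positivity) ω
        have h2 := ih ω
        rw [kk_iter θ hθ0 hθadd]
        have e : (((n + 1) * m : ℕ) : ℝ) = ((n * m : ℕ) : ℝ) + m := by push_cast; ring
        have e2 : θ ((n:ℝ) * m) ω = θ (((n * m : ℕ) : ℝ)) ω := by push_cast; rfl
        rw [e, e2]; linarith
    have key : ∀ δ > 0, ∫ ω, -Z m ω ∂ℙ ≤ -(m * c) + δ := by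
      intro δ hδ
      refine kk_add ℙ (θ m) (hθmp m) (fun ω => -Z m ω) (fun ω => by
        have := hneg m hm0.le ω; linarith) (hmeas m).neg (hZint m).neg _ ?_
      filter_upwards [hae] with ω ⟨M, hM⟩
      rw [frequently_atTop] at hM
      obtain ⟨a, ha⟩ := exists_nat_ge ((M + m * |c|) / δ)
      obtain ⟨n, hn, h⟩ := hM ((a + 1) * m)
      set q := n / m with hq
      have hq1 : a + 1 ≤ q := by rw [hq, Nat.le_div_iff_mul_le (by omega)]; exact hn
      have hqn : q * m ≤ n := Nat.div_mul_le_self n m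
      have hqn2 : n ≤ q * m + m := by
        have := Nat.div_add_mod n m
        have := Nat.mod_lt n (show m > 0 by omega)
        have : m * (n/m) = q * m := by rw [hq, mul_comm]
        omega
      refine ⟨q, by omega, ?_⟩
      have h1 := hsum q ω
      have h2 := hanti ((q * m : ℕ) : ℝ) n (by positivity) (by exact_mod_cast hqn) ω
      simp only [Finset.sum_neg_distrib]
      rw [div_le_iff₀ hδ] at ha
      have hq1' : (a:ℝ) ≤ q := by exact_mod_cast (by omega : a ≤ q)
      have hqn' : (q:ℝ) * m ≤ n := by exact_mod_cast hqn
      have hqn2' : (n:ℝ) ≤ q * m + m := by exact_mod_cast hqn2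
      have h3 : q * m * c - m * |c| ≤ n * c := by
        have : |((n:ℝ) - q * m) * c| ≤ m * |c| := by
          rw [abs_mul]
          refine mul_le_mul_of_nonneg_right ?_ (abs_nonneg c)
          rw [abs_of_nonneg (by linarith)]; linarith
        have := (abs_le.1 this).1
        nlinarith
      nlinarith
    have : ∫ ω, -Z m ω ∂ℙ ≤ -(m * c) := le_of_forall_pos_le_add key
    rw [integral_neg] at this
    linarith
  set S : Set ℝ := {c | ℙ (G c) = 1} with hS
  have hS0 : (0:ℝ) ∈ S := by
    have : G 0 = Set.univ := by
      ext ω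
      simp only [hG, Set.mem_ofPred_eq, Set.mem_univ, iff_true]
      refine ⟨1, Frequently.of_forall fun n => ?_⟩
      have := hneg n (by positivity) ω
      simp; linarith
    rw [hS, Set.mem_ofPred_eq, this]; simp
  have hSb : BddBelow S := by
    refine ⟨-C, fun c hc => ?_⟩
    refine le_of_forall_pos_le_add fun δ hδ => ?_
    obtain ⟨K, hK1, hK⟩ := hA c hc δ hδ
    have h1 := hlow K
    have hK0 : (0:ℝ) < K := by exact_mod_cast hK1
    have : (K:ℝ) * (-C) ≤ K * (c + δ) := by linarith
    exact le_of_mul_le_mul_left this hK0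
  refine ⟨sInf S, ?_⟩
  have hlo : ∀ k : ℕ, ∀ᵐ ω ∂ℙ, ∀ᶠ n : ℕ in atTop, n * (sInf S - 1 / (k + 1)) ≤ Z n ω := by
    intro k
    have hpos : (0:ℝ) < 1 / (k + 1) := by positivity
    have hn : sInf S - 1 / (k + 1) ∉ S := fun h => by
      have := csInf_le hSb h; linarith
    have h0 : ℙ (G (sInf S - 1 / (k + 1))) = 0 := (hG01 _).resolve_right hn
    have : ∀ᵐ ω ∂ℙ, ω ∉ G (sInf S - 1 / (k + 1)) := measure_eq_zero_iff_ae_notMem.1 h0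
    filter_upwards [this] with ω hω
    simp only [hG, Set.mem_ofPred_eq, not_exists, not_frequently, not_lt] at hω
    simpa using hω 0
  have hhi : ∀ k : ℕ, ∀ᵐ ω ∂ℙ, ∀ᶠ n : ℕ in atTop, Z n ω ≤ n * (sInf S + 1 / (k + 1)) := by
    intro k
    have hpos : (0:ℝ) < 1 / (k + 1) := by positivity
    obtain ⟨c1, hc1, hlt⟩ := exists_lt_of_csInf_lt ⟨0, hS0⟩ (show sInf S < sInf S + 1 / (k + 1) by linarith)
    have hn : ℙ (F (sInf S + 1 / (k + 1))) ≠ 1 := by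
      intro h
      obtain ⟨K, hK1, hK⟩ := hA c1 hc1 ((sInf S + 1 / (k + 1) - c1) / 2) (by linarith)
      have h2 := hB _ h K hK1
      have hK0 : (0:ℝ) < K := by exact_mod_cast hK1
      have := le_of_mul_le_mul_left (h2.trans hK) hK0
      linarith
    have h0 := (hF01 _).resolve_right hn
    have : ∀ᵐ ω ∂ℙ, ω ∉ F (sInf S + 1 / (k + 1)) := measure_eq_zero_iff_ae_notMem.1 h0
    filter_upwards [this] with ω hω
    simp only [hF, Set.mem_ofPred_eq, not_exists, not_frequently, not_lt] at hω
    simpa using hω 0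
  filter_upwards [ae_all_iff.2 hlo, ae_all_iff.2 hhi] with ω h1 h2
  set l := sInf S
  have hn : Tendsto (fun n : ℕ => (n:ℝ)⁻¹ * Z n ω) atTop (nhds l) := by
    rw [Metric.tendsto_atTop']
    intro ε hε
    obtain ⟨k, hk⟩ := exists_nat_one_div_lt hε
    have := ((h1 k).and (h2 k)).and (eventually_gt_atTop 0)
    obtain ⟨n0, hn0⟩ := eventually_atTop.1 this
    refine ⟨n0, fun n hn => ?_⟩
    obtain ⟨⟨ha, hb⟩, hc⟩ := hn0 n hn.le
    have hc' : (0:ℝ) < n := by exact_mod_cast hc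
    rw [Real.dist_eq, abs_lt]
    have ha' : l - 1 / (k + 1) ≤ (n:ℝ)⁻¹ * Z n ω := by
      rw [inv_mul_eq_div, le_div_iff₀ hc']; linarith
    have hb' : (n:ℝ)⁻¹ * Z n ω ≤ l + 1 / (k + 1) := by
      rw [inv_mul_eq_div, div_le_iff₀ hc']; linarith
    constructor <;> linarith
  -- pass to real time
  have hfl : Tendsto (fun t : ℝ => ((⌊t⌋₊ : ℕ) : ℝ) / t) atTop (nhds 1) := tendsto_nat_floor_div_atTop
  have hce : Tendsto (fun t : ℝ => ((⌈t⌉₊ : ℕ) : ℝ) / t) atTop (nhds 1) := tendsto_nat_ceil_div_atTop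
  have hu := (hn.comp (tendsto_nat_floor_atTop (α := ℝ))).mul hfl
  have hd := (hn.comp (tendsto_nat_ceil_atTop (α := ℝ))).mul hce
  rw [mul_one] at hu hd
  refine tendsto_of_tendsto_of_tendsto_of_le_of_le' hd hu ?_ ?_
  · filter_upwards [eventually_gt_atTop 1] with t ht
    have hc : (0:ℝ) < (⌈t⌉₊ : ℕ) := by exact_mod_cast Nat.ceil_pos.2 (by linarith)
    simp only [Function.comp]
    have : ((⌈t⌉₊ : ℕ) : ℝ)⁻¹ * Z (⌈t⌉₊ : ℕ) ω * (((⌈t⌉₊ : ℕ) : ℝ) / t) = t⁻¹ * Z (⌈t⌉₊ : ℕ) ω := by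
      field_simp
    rw [this]
    exact mul_le_mul_of_nonneg_left (hanti _ _ (by linarith) (Nat.le_ceil t) ω) (by positivity)
  · filter_upwards [eventually_gt_atTop 1] with t ht
    have hc : (0:ℝ) < (⌊t⌋₊ : ℕ) := by exact_mod_cast Nat.floor_pos.2 ht.le
    simp only [Function.comp]
    have : ((⌊t⌋₊ : ℕ) : ℝ)⁻¹ * Z (⌊t⌋₊ : ℕ) ω * (((⌊t⌋₊ : ℕ) : ℝ) / t) = t⁻¹ * Z (⌊t⌋₊ : ℕ) ω := by
      field_simp
    rw [this]
    exact mul_le_mul_of_nonneg_left (hanti _ _ (by positivity) (Nat.floor_le (by linarith)) ω) (by positivity)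


lemma kk_ac_comp {u G : ℝ → ℝ} {a b : ℝ} (hu : AbsolutelyContinuousOnInterval u a b)
    {K : NNReal} {s : Set ℝ} (hG : LipschitzOnWith K G s) (hs : ∀ x ∈ Set.uIcc a b, u x ∈ s) :
    AbsolutelyContinuousOnInterval (fun x => G (u x)) a b := by
  rw [absolutelyContinuousOnInterval_iff] at hu ⊢
  intro ε hε
  obtain ⟨δ, hδ, h⟩ := hu (ε / (K + 1)) (by positivity)
  refine ⟨δ, hδ, fun E hE hlt => ?_⟩
  have h1 := h E hE hlt
  rw [lt_div_iff₀ (by positivity)] at h1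
  refine lt_of_le_of_lt ?_ h1
  rw [Finset.sum_mul]
  refine Finset.sum_le_sum fun i hi => ?_
  have h2 := hG.dist_le_mul _ (hs _ (hE.1 i hi).1) _ (hs _ (hE.1 i hi).2)
  have : (0:ℝ) ≤ dist (u (E.2 i).1) (u (E.2 i).2) := dist_nonneg
  nlinarith

lemma kk_chain (g : ℝ → ℝ) (hg : ∀ a b, IntervalIntegrable g volume a b) (u0 : ℝ) (u : ℝ → ℝ)
    (hu : ∀ t, u t = u0 + ∫ s in (0:ℝ)..t, g s)
    (G G' : ℝ → ℝ) (hG : ∀ x, HasDerivAt G (G' x) x) (hG' : Continuous G') (t : ℝ) :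
    ∫ s in (0:ℝ)..t, G' (u s) * g s = G (u t) - G u0 := by
  have hu0 : u 0 = u0 := by simp [hu]
  have hac : AbsolutelyContinuousOnInterval u 0 t := by
    have h1 := (hg 0 t).absolutelyContinuousOnInterval_intervalIntegral (c := 0) (by simp)
    have h2 : AbsolutelyContinuousOnInterval (fun _ : ℝ => u0) 0 t :=
      ((LipschitzWith.const u0).lipschitzOnWith (s := Set.uIcc 0 t)).absolutelyContinuousOnInterval
    have := h2.add h1
    have e : u = (fun _ : ℝ => u0) + fun x => ∫ v in (0:ℝ)..x, g v := by ext x; simp [hu]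
    rw [e]; exact this
  have hcd : ContDiff ℝ 1 G := by
    rw [contDiff_one_iff_deriv]
    refine ⟨fun x => (hG x).differentiableAt, ?_⟩
    have : deriv G = G' := funext fun x => (hG x).deriv
    rw [this]; exact hG'
  obtain ⟨C, hC⟩ := hac.exists_bound
  obtain ⟨K, hK⟩ := hcd.contDiffOn.exists_lipschitzOnWith (s := Set.Icc (-C) C) (n := 1)
    (by norm_num) (convex_Icc _ _) isCompact_Icc
  have hac2 : AbsolutelyContinuousOnInterval (fun x => G (u x)) 0 t :=
    kk_ac_comp hac hK fun x hx => by
      have := hC x hx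
      rw [Real.norm_eq_abs, abs_le] at this
      exact this
  have := hac2.integral_deriv_eq_sub
  rw [hu0] at this
  rw [← this]
  apply intervalIntegral.integral_congr_ae
  filter_upwards [(hg 0 t).ae_hasDerivAt_integral] with x hx hx2
  have h1 := hx (Set.uIoc_subset_uIcc hx2) 0 (by simp)
  have h2 : HasDerivAt u (g x) x := by
    have e : u = fun x => u0 + ∫ v in (0:ℝ)..x, g v := by ext x; simp [hu]
    rw [e]; exact h1.const_add u0
  exact ((hG (u x)).comp x h2).deriv.symm

lemma kk_expint (g : ℝ → ℝ) (hg : ∀ a b, IntervalIntegrable g volume a b) (c : ℝ) (hc : c ≠ 0) (t : ℝ) :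
    ∫ s in (0:ℝ)..t, g s * Real.exp (c * ∫ r in (0:ℝ)..s, g r)
      = (Real.exp (c * ∫ r in (0:ℝ)..t, g r) - 1) / c := by
  have := kk_chain g hg 0 (fun t => ∫ r in (0:ℝ)..t, g r) (by simp) (fun x => Real.exp (c * x) / c)
    (fun x => Real.exp (c * x)) (fun x => by
      have h := (((hasDerivAt_id x).const_mul c).exp).div_const c
      refine HasDerivAt.congr_deriv h ?_
      rw [mul_one, mul_div_assoc, div_self hc, mul_one]; rfl) (by fun_prop) t
  simp only [mul_zero, Real.exp_zero] at this
  rw [sub_div, ← this]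
  congr 1; ext s; ring

lemma kk_prim_cont (g : ℝ → ℝ) (hg : ∀ a b, IntervalIntegrable g volume a b) :
    Continuous fun t => ∫ r in (0:ℝ)..t, g r :=
  intervalIntegral.continuous_primitive (fun a b => hg a b) 0

lemma kk_gronwall (β h : ℝ → ℝ) (hβ : ∀ a b, IntervalIntegrable β volume a b) (hβ0 : ∀ s, 0 ≤ β s)
    (hh : Continuous h) (h0 : ℝ) 
    (hle : ∀ t, 0 ≤ t → h t ≤ h0 + ∫ s in (0:ℝ)..t, β s * h s) (T : ℝ) (hT : 0 ≤ T) :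
    h T ≤ h0 * Real.exp (∫ s in (0:ℝ)..T, β s) := by
  have hB := kk_prim_cont β hβ
  set B := fun t => ∫ r in (0:ℝ)..t, β r with hBd
  have hcont : Continuous fun t => h t * Real.exp (-B t) := by fun_prop
  obtain ⟨τ, hτ, hmax⟩ := isCompact_Icc.exists_isMaxOn (Set.nonempty_Icc.2 hT) hcont.continuousOn
  set H := h τ * Real.exp (-B τ) with hH
  have hb : ∀ s ∈ Set.Icc 0 T, h s ≤ H * Real.exp (B s) := by
    intro s hs
    have h1 : h s * Real.exp (-B s) ≤ H := hmax hs
    have h2 := mul_le_mul_of_nonneg_right h1 (Real.exp_pos (B s)).le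
    rwa [mul_assoc, ← Real.exp_add, neg_add_cancel, Real.exp_zero, mul_one] at h2
  have h1 : ∫ s in (0:ℝ)..τ, β s * h s ≤ ∫ s in (0:ℝ)..τ, H * (β s * Real.exp (1 * B s)) := by
    refine intervalIntegral.integral_mono_on hτ.1 ((hβ _ _).mul_continuousOn hh.continuousOn) ?_ ?_
    · exact ((hβ _ _).mul_continuousOn (by fun_prop)).const_mul H
    · intro s hs
      have := mul_le_mul_of_nonneg_left (hb s ⟨hs.1, hs.2.trans hτ.2⟩) (hβ0 s)
      rw [one_mul]; linarith
  rw [intervalIntegral.integral_const_mul, kk_expint β hβ 1 one_ne_zero, one_mul, div_one] at h1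
  have h2 := hle τ hτ.1
  have h3 : h τ = H * Real.exp (B τ) := by
    rw [hH, mul_assoc, ← Real.exp_add, neg_add_cancel, Real.exp_zero, mul_one]
  have h4 : H ≤ h0 := by
    have : (∫ s in (0:ℝ)..τ, β s) = B τ := rfl
    rw [this] at h1
    linarith
  exact (hb T ⟨hT, le_rfl⟩).trans (mul_le_mul_of_nonneg_right h4 (Real.exp_pos _).le)

lemma kk_min_deriv (x : ℝ) : HasDerivAt (fun x : ℝ => (min x 0) ^ 2) (2 * min x 0) x := by
  rcases lt_trichotomy x 0 with h | h | h
  · rw [min_eq_left h.le]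
    have := hasDerivAt_pow 2 x
    simp only [Nat.cast_ofNat, Nat.add_one_sub_one, pow_one] at this
    refine this.congr_of_eventuallyEq ?_
    filter_upwards [Iio_mem_nhds h] with y hy
    rw [min_eq_left (le_of_lt hy)]
  · subst h
    rw [hasDerivAt_iff_tendsto_slope]
    have hc : Tendsto (fun y : ℝ => min y 0) (nhdsWithin 0 {0}ᶜ) (nhds (2 * min 0 0)) := by
      have : Continuous fun y : ℝ => min y 0 := by fun_prop
      have := this.tendsto 0
      simp only [min_self, mul_zero] at this ⊢
      exact this.mono_left nhdsWithin_le_nhds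
    refine hc.congr' ?_
    filter_upwards [self_mem_nhdsWithin] with y hy
    have hy' : y ≠ 0 := hy
    rw [slope_def_field]
    simp only [min_self, sub_zero]
    rcases le_total y 0 with h | h
    · rw [min_eq_left h]; field_simp; simp
    · rw [min_eq_right h]; simp
  · rw [min_eq_right h.le, mul_zero]
    refine (hasDerivAt_const x (0:ℝ)).congr_of_eventuallyEq ?_
    filter_upwards [Ioi_mem_nhds h] with y hy
    rw [min_eq_right (le_of_lt hy)]; simp

section ode

lemma kk_int_row {N : ℕ} (M : ℝ → Matrix (Fin N) (Fin N) ℝ)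
    (hM : ∀ i j a b, IntervalIntegrable (fun s => M s i j) volume a b)
    (x : ℝ → Fin N → ℝ) (hx : ∀ i, Continuous fun s => x s i) (i : Fin N) (a b : ℝ) :
    IntervalIntegrable (fun s => ∑ j, M s i j * x s j) volume a b := by
  have : (fun s => ∑ j, M s i j * x s j) = ∑ j, fun s => M s i j * x s j := by
    ext s; simp
  rw [this]
  exact IntervalIntegrable.sum _ fun j _ => (hM i j a b).mul_continuousOn (hx j).continuousOn

lemma kk_int_beta {N : ℕ} (M : ℝ → Matrix (Fin N) (Fin N) ℝ)
    (hM : ∀ i j a b, IntervalIntegrable (fun s => M s i j) volume a b)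
    (a b : ℝ) :
    IntervalIntegrable (fun s => ∑ i, ∑ j, |M s i j|) volume a b := by
  have : (fun s => ∑ i, ∑ j, |M s i j|) = ∑ i, ∑ j, fun s => |M s i j| := by
    ext s; simp
  rw [this]
  exact IntervalIntegrable.sum _ fun i _ => IntervalIntegrable.sum _ fun j _ => (hM i j a b).abs

lemma kk_abs {N : ℕ} (M : ℝ → Matrix (Fin N) (Fin N) ℝ)
    (hM : ∀ i j a b, IntervalIntegrable (fun s => M s i j) volume a b)
    (x w : ℝ → Fin N → ℝ) (hx : ∀ i, Continuous fun s => x s i) (t : ℝ) (ht : 0 ≤ t)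
    (hw : ∀ i, w t i = ∫ s in (0:ℝ)..t, ∑ j, M s i j * x s j) :
    ∑ i, |w t i| ≤ ∫ s in (0:ℝ)..t, (∑ i, ∑ j, |M s i j|) * ∑ j, |x s j| := by
  have h1 : ∀ i, |w t i| ≤ ∫ s in (0:ℝ)..t, |∑ j, M s i j * x s j| := by
    intro i
    rw [hw]
    exact intervalIntegral.abs_integral_le_integral_abs ht
  refine (Finset.sum_le_sum fun i _ => h1 i).trans ?_
  rw [← intervalIntegral.integral_finsetSum fun i _ => (kk_int_row M hM x hx i _ _).abs]
  refine intervalIntegral.integral_mono_on ht ?_ ?_ ?_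
  · have : (fun s => ∑ i, |∑ j, M s i j * x s j|) = ∑ i, fun s => |∑ j, M s i j * x s j| := by
      ext s; simp
    rw [this]
    exact IntervalIntegrable.sum _ fun i _ => (kk_int_row M hM x hx i _ _).abs
  · exact (kk_int_beta M hM _ _).mul_continuousOn (by fun_prop)
  · intro s _
    rw [Finset.sum_mul]
    refine Finset.sum_le_sum fun i _ => (Finset.abs_sum_le_sum_abs _ _).trans ?_
    rw [Finset.sum_mul]
    refine Finset.sum_le_sum fun j _ => ?_
    rw [abs_mul]
    exact mul_le_mul_of_nonneg_left
      (Finset.single_le_sum (f := fun j => |x s j|) (fun j _ => abs_nonneg _) (Finset.mem_univ j)) (abs_nonneg _)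

lemma kk_unique {N : ℕ} (M : ℝ → Matrix (Fin N) (Fin N) ℝ)
    (hM : ∀ i j a b, IntervalIntegrable (fun s => M s i j) volume a b)
    (u0 : Fin N → ℝ) (u v : ℝ → Fin N → ℝ) (hu : ∀ i, Continuous fun s => u s i)
    (hv : ∀ i, Continuous fun s => v s i)
    (hue : ∀ t, 0 ≤ t → ∀ i, u t i = u0 i + ∫ s in (0:ℝ)..t, ∑ j, M s i j * u s j)
    (hve : ∀ t, 0 ≤ t → ∀ i, v t i = u0 i + ∫ s in (0:ℝ)..t, ∑ j, M s i j * v s j)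
    (t : ℝ) (ht : 0 ≤ t) (i : Fin N) : u t i = v t i := by
  have h := kk_gronwall (fun s => ∑ i, ∑ j, |M s i j|) (fun s => ∑ i, |u s i - v s i|)
    (kk_int_beta M hM) (fun s => by positivity) (by fun_prop) 0 (fun t ht => by
      rw [zero_add]
      refine kk_abs M hM (fun s i => u s i - v s i) (fun s i => u s i - v s i) (fun i => by fun_prop) t ht
        fun i => ?_
      rw [hue t ht, hve t ht, add_sub_add_left_eq_sub, ← intervalIntegral.integral_sub
        (kk_int_row M hM u hu i _ _) (kk_int_row M hM v hv i _ _)]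
      congr 1; ext s
      rw [← Finset.sum_sub_distrib]
      refine Finset.sum_congr rfl fun j _ => by ring) t ht
  rw [zero_mul] at h
  have h2 := (Finset.single_le_sum (f := fun i => |u t i - v t i|) (fun j _ => abs_nonneg _) (Finset.mem_univ i)).trans h
  have := abs_nonpos_iff.1 h2
  linarith

lemma kk_pos {N : ℕ} (M : ℝ → Matrix (Fin N) (Fin N) ℝ)
    (hM : ∀ i j a b, IntervalIntegrable (fun s => M s i j) volume a b)
    (hcoop : ∀ s i j, i ≠ j → 0 ≤ M s i j) (u0 : Fin N → ℝ) (hu0 : ∀ i, 0 ≤ u0 i)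
    (u : ℝ → Fin N → ℝ) (hu : ∀ i, Continuous fun s => u s i)
    (hue : ∀ t i, u t i = u0 i + ∫ s in (0:ℝ)..t, ∑ j, M s i j * u s j)
    (t : ℝ) (ht : 0 ≤ t) (i : Fin N) : 0 ≤ u t i := by
  have hc : ∀ i t, ∫ s in (0:ℝ)..t, (2 * min (u s i) 0) * (∑ j, M s i j * u s j) = (min (u t i) 0) ^ 2 := by
    intro i t
    have := kk_chain (fun s => ∑ j, M s i j * u s j) (kk_int_row M hM u hu i) (u0 i) (fun t => u t i)
      (fun t => hue t i) _ _ kk_min_deriv (by fun_prop) t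
    rw [this, min_eq_right (hu0 i)]; simp
  have hii : ∀ i a b, IntervalIntegrable (fun s => (2 * min (u s i) 0) * (∑ j, M s i j * u s j)) volume a b :=
    fun i a b => (kk_int_row M hM u hu i a b).continuousOn_mul (by fun_prop)
  have h := kk_gronwall (fun s => 2 * ∑ i, ∑ j, |M s i j|) (fun s => ∑ i, (min (u s i) 0) ^ 2)
    (fun a b => (kk_int_beta M hM a b).const_mul 2) (fun s => by positivity) (by fun_prop) 0 (fun t ht => by
      rw [zero_add]
      simp only [← hc _ t]
      rw [← intervalIntegral.integral_finsetSum fun i _ => hii i _ _]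
      refine intervalIntegral.integral_mono_on ht ?_ ?_ ?_
      · have : (fun s => ∑ i, (2 * min (u s i) 0) * (∑ j, M s i j * u s j))
          = ∑ i, fun s => (2 * min (u s i) 0) * (∑ j, M s i j * u s j) := by ext s; simp
        rw [this]
        exact IntervalIntegrable.sum _ fun i _ => hii i _ _
      · exact ((kk_int_beta M hM _ _).const_mul 2).mul_continuousOn (by fun_prop)
      · intro s _
        simp only [Finset.mul_sum (a := (2:ℝ)), Finset.sum_mul]
        refine Finset.sum_le_sum fun i _ => ?_
        rw [Finset.mul_sum]
        refine Finset.sum_le_sum fun j _ => ?_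
        set S := ∑ i, (min (u s i) 0) ^ 2 with hS
        have hs1 : ∀ i, (min (u s i) 0) ^ 2 ≤ S := fun i =>
          Finset.single_le_sum (f := fun i => (min (u s i) 0) ^ 2) (fun j _ => sq_nonneg _) (Finset.mem_univ i)
        have hi := hs1 i
        have hj := hs1 j
        have hmm : min (u s i) 0 * min (u s j) 0 ≤ S := by
          nlinarith [sq_nonneg (min (u s i) 0 - min (u s j) 0)]
        have hi0 : min (u s i) 0 ≤ 0 := min_le_right _ _
        have key : min (u s i) 0 * (M s i j * u s j) ≤ |M s i j| * S := by
          by_cases hij : i = j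
          · subst hij
            have e : min (u s i) 0 * u s i = (min (u s i) 0) ^ 2 := by
              rcases le_total (u s i) 0 with h | h
              · rw [min_eq_left h]; ring
              · rw [min_eq_right h]; ring
            calc min (u s i) 0 * (M s i i * u s i) = M s i i * (min (u s i) 0) ^ 2 := by rw [← e]; ring
              _ ≤ |M s i i| * (min (u s i) 0) ^ 2 := mul_le_mul_of_nonneg_right (le_abs_self _) (sq_nonneg _)
              _ ≤ _ := mul_le_mul_of_nonneg_left hi (abs_nonneg _)
          · have h0 := hcoop s i j hij
            rw [abs_of_nonneg h0]
            have h1 : min (u s i) 0 * u s j ≤ min (u s i) 0 * min (u s j) 0 :=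
              mul_le_mul_of_nonpos_left (min_le_left _ _) hi0
            calc min (u s i) 0 * (M s i j * u s j) = M s i j * (min (u s i) 0 * u s j) := by ring
              _ ≤ _ := mul_le_mul_of_nonneg_left (h1.trans hmm) h0
        linarith) t ht
  rw [zero_mul] at h
  have h2 := (Finset.single_le_sum (f := fun i => (min (u t i) 0) ^ 2) (fun j _ => sq_nonneg _) (Finset.mem_univ i)).trans h
  have h3 : min (u t i) 0 = 0 := by
    have := le_antisymm h2 (sq_nonneg _)
    exact pow_eq_zero_iff (two_ne_zero) |>.1 this
  exact min_eq_right_iff.1 h3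

lemma kk_growth {N : ℕ} (M : ℝ → Matrix (Fin N) (Fin N) ℝ)
    (hM : ∀ i j a b, IntervalIntegrable (fun s => M s i j) volume a b)
    (b : ℝ → ℝ) (hb : ∀ a c, IntervalIntegrable b volume a c) (hb0 : ∀ s, 0 ≤ b s)
    (hMb : ∀ s i j, M s i j ≤ b s) (u0 : Fin N → ℝ)
    (u : ℝ → Fin N → ℝ) (hu : ∀ i, Continuous fun s => u s i)
    (hupos : ∀ t, 0 ≤ t → ∀ i, 0 ≤ u t i)
    (hue : ∀ t i, u t i = u0 i + ∫ s in (0:ℝ)..t, ∑ j, M s i j * u s j)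
    (t : ℝ) (ht : 0 ≤ t) : ∑ i, u t i ≤ (∑ i, u0 i) * Real.exp (∫ s in (0:ℝ)..t, N * b s) := by
  refine kk_gronwall (fun s => N * b s) (fun s => ∑ i, u s i) (fun a c => (hb a c).const_mul _)
    (fun s => mul_nonneg (Nat.cast_nonneg _) (hb0 s)) (by fun_prop) _ (fun t ht => ?_) t ht
  have e1 : ∑ i, u t i = ∑ i, (u0 i + ∫ s in (0:ℝ)..t, ∑ j, M s i j * u s j) :=
    Finset.sum_congr rfl fun i _ => hue t i
  rw [e1, Finset.sum_add_distrib, ← intervalIntegral.integral_finsetSum fun i _ => kk_int_row M hM u hu i _ _]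
  refine add_le_add_right ?_ _
  refine intervalIntegral.integral_mono_on ht ?_ ?_ ?_
  · have : (fun s => ∑ i, ∑ j, M s i j * u s j) = ∑ i, fun s => ∑ j, M s i j * u s j := by ext s; simp
    rw [this]
    exact IntervalIntegrable.sum _ fun i _ => kk_int_row M hM u hu i _ _
  · exact ((hb _ _).const_mul _).mul_continuousOn (by fun_prop)
  · intro s hs
    calc ∑ i, ∑ j, M s i j * u s j ≤ ∑ i : Fin N, ∑ j, b s * u s j :=
          Finset.sum_le_sum fun i _ => Finset.sum_le_sum fun j _ =>
            mul_le_mul_of_nonneg_right (hMb s i j) (hupos s hs.1 j)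
      _ = _ := by simp [← Finset.mul_sum]; ring

/-- Picard iterates. -/
noncomputable def kkPic {N : ℕ} (M : ℝ → Matrix (Fin N) (Fin N) ℝ) (u0 : Fin N → ℝ) : ℕ → ℝ → Fin N → ℝ
  | 0 => fun _ => u0
  | n + 1 => fun t i => u0 i + ∫ s in (0:ℝ)..t, ∑ j, M s i j * kkPic M u0 n s j

lemma kkPic_cont {N : ℕ} (M : ℝ → Matrix (Fin N) (Fin N) ℝ)
    (hM : ∀ i j a b, IntervalIntegrable (fun s => M s i j) volume a b)
    (u0 : Fin N → ℝ) (n : ℕ) (i : Fin N) : Continuous fun t => kkPic M u0 n t i := by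
  induction n generalizing i with
  | zero => exact continuous_const
  | succ n ih =>
    exact continuous_const.add (kk_prim_cont _ (kk_int_row M hM _ ih i))

lemma kkPic_tendsto {N : ℕ} (M : ℝ → Matrix (Fin N) (Fin N) ℝ)
    (hM : ∀ i j a b, IntervalIntegrable (fun s => M s i j) volume a b)
    (u0 : Fin N → ℝ) (u : ℝ → Fin N → ℝ) (hu : ∀ i, Continuous fun s => u s i)
    (hue : ∀ t i, u t i = u0 i + ∫ s in (0:ℝ)..t, ∑ j, M s i j * u s j)
    (T : ℝ) (hT : 0 ≤ T) (i : Fin N) :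
    Tendsto (fun n => kkPic M u0 n T i) atTop (nhds (u T i)) := by
  have hβ := kk_int_beta M hM
  set β := fun s => ∑ i, ∑ j, |M s i j| with hβd
  have hβ0 : ∀ s, 0 ≤ β s := fun s => by positivity
  have hB := kk_prim_cont β hβ
  have hBpos : ∀ t, 0 ≤ t → 0 ≤ ∫ r in (0:ℝ)..t, β r := fun t ht =>
    intervalIntegral.integral_nonneg ht fun s _ => hβ0 s
  have hc0 : Continuous fun t => ∑ i, |kkPic M u0 0 t i - u t i| :=
    continuous_finsetSum _ fun i _ => ((kkPic_cont M hM u0 0 i).sub (hu i)).abs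
  obtain ⟨τ, hτ, hmax⟩ := isCompact_Icc.exists_isMaxOn (Set.nonempty_Icc.2 hT) hc0.continuousOn
  set K := ∑ i, |kkPic M u0 0 τ i - u τ i| with hK
  have hK0 : 0 ≤ K := by positivity
  have key : ∀ n : ℕ, ∀ t ∈ Set.Icc 0 T, ∑ i, |kkPic M u0 n t i - u t i|
      ≤ K * (1/2) ^ n * Real.exp (2 * ∫ r in (0:ℝ)..t, β r) := by
    intro n
    induction n with
    | zero =>
      intro t ht
      have h1 : ∑ i, |kkPic M u0 0 t i - u t i| ≤ K := hmax ht
      have h2 : 1 ≤ Real.exp (2 * ∫ r in (0:ℝ)..t, β r) :=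
        Real.one_le_exp (by have := hBpos t ht.1; linarith)
      rw [pow_zero, mul_one]
      nlinarith
    | succ n ih =>
      intro t ht
      have h1 := kk_abs M hM (fun s i => kkPic M u0 n s i - u s i) (fun s i => kkPic M u0 (n+1) s i - u s i)
        (fun i => (kkPic_cont M hM u0 n i).sub (hu i)) t ht.1 (fun i => by
          show (u0 i + ∫ s in (0:ℝ)..t, ∑ j, M s i j * kkPic M u0 n s j) - u t i = _
          rw [hue t, add_sub_add_left_eq_sub, ← intervalIntegral.integral_sub
            (kk_int_row M hM _ (kkPic_cont M hM u0 n) i _ _) (kk_int_row M hM u hu i _ _)]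
          congr 1; ext s
          rw [← Finset.sum_sub_distrib]
          refine Finset.sum_congr rfl fun j _ => by ring)
      refine h1.trans ?_
      have h2 : ∫ s in (0:ℝ)..t, β s * ∑ j, |kkPic M u0 n s j - u s j|
          ≤ ∫ s in (0:ℝ)..t, (K * (1/2) ^ n) * (β s * Real.exp (2 * ∫ r in (0:ℝ)..s, β r)) := by
        refine intervalIntegral.integral_mono_on ht.1 ?_ ?_ ?_
        · exact (hβ _ _).mul_continuousOn (continuous_finsetSum _ fun i _ =>
            ((kkPic_cont M hM u0 n i).sub (hu i)).abs).continuousOn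
        · exact ((hβ _ _).mul_continuousOn (by fun_prop)).const_mul _
        · intro s hs
          have := mul_le_mul_of_nonneg_left (ih s ⟨hs.1, hs.2.trans ht.2⟩) (hβ0 s)
          linarith
      refine h2.trans ?_
      rw [intervalIntegral.integral_const_mul, kk_expint β hβ 2 two_ne_zero, pow_succ]
      have : 0 ≤ K * (1/2)^n := by positivity
      nlinarith
  rw [tendsto_iff_dist_tendsto_zero]
  have hz : Tendsto (fun n : ℕ => K * (1/2) ^ n * Real.exp (2 * ∫ r in (0:ℝ)..T, β r)) atTop (nhds 0) := by
    have := ((tendsto_pow_atTop_nhds_zero_of_lt_one (r := (1/2:ℝ)) (by norm_num) (by norm_num)).const_mul K).mul_const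
      (Real.exp (2 * ∫ r in (0:ℝ)..T, β r))
    simpa using this
  refine squeeze_zero (fun _ => dist_nonneg) (fun n => ?_) hz
  refine le_trans ?_ (key n T ⟨hT, le_rfl⟩)
  rw [Real.dist_eq]
  exact Finset.single_le_sum (f := fun i => |kkPic M u0 n T i - u T i|) (fun j _ => abs_nonneg _) (Finset.mem_univ i)
end ode


lemma kk_abs_le_enorm {N : ℕ} (u : Fin N → ℝ) (i : Fin N) : |u i| ≤ enorm' u := by
  unfold enorm'
  rw [← Real.sqrt_sq_eq_abs]
  exact Real.sqrt_le_sqrt (Finset.single_le_sum (f := fun i => (u i)^2) (fun j _ => sq_nonneg _) (Finset.mem_univ i))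

lemma kk_enorm_le {N : ℕ} (u : Fin N → ℝ) : enorm' u ≤ ∑ i, |u i| := by
  unfold enorm'
  apply Real.sqrt_le_iff.2
  refine ⟨by positivity, ?_⟩
  have := Finset.sum_sq_le_sq_sum_of_nonneg (s := Finset.univ) (f := fun i => |u i|) (fun _ _ => abs_nonneg _)
  simpa using this

lemma kk_enorm_single {N : ℕ} (j : Fin N) : enorm' (Pi.single j (1:ℝ)) = 1 := by
  unfold enorm'
  simp [Pi.single_apply, ite_pow]

lemma kk_bdd {N : ℕ} (M : Matrix (Fin N) (Fin N) ℝ) (u : Fin N → ℝ) (hu : enorm' u ≤ 1) :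
    enorm' (M.mulVec u) ≤ ∑ i, ∑ j, |M i j| := by
  refine (kk_enorm_le _).trans (Finset.sum_le_sum fun i _ => ?_)
  simp only [Matrix.mulVec, dotProduct]
  refine (Finset.abs_sum_le_sum_abs _ _).trans (Finset.sum_le_sum fun j _ => ?_)
  rw [abs_mul]
  have := (kk_abs_le_enorm u j).trans hu
  exact mul_le_of_le_one_right (abs_nonneg _) this

lemma kk_le_eop {N : ℕ} (M : Matrix (Fin N) (Fin N) ℝ) (u : Fin N → ℝ) (hu : enorm' u ≤ 1) :
    enorm' (M.mulVec u) ≤ eopNorm M := by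
  refine le_csSup ⟨∑ i, ∑ j, |M i j|, ?_⟩ ⟨u, hu, rfl⟩
  rintro c ⟨v, hv, rfl⟩
  exact kk_bdd M v hv

lemma kk_entry_le {N : ℕ} (M : Matrix (Fin N) (Fin N) ℝ) (i j : Fin N) : |M i j| ≤ eopNorm M := by
  have h1 := kk_le_eop M (Pi.single j 1) (kk_enorm_single j).le
  have h2 := kk_abs_le_enorm (M.mulVec (Pi.single j 1)) i
  rw [Matrix.mulVec_single_one] at h1 h2
  exact h2.trans h1

/-- Maximal column sum. -/
noncomputable def kkn {N : ℕ} (M : Matrix (Fin N) (Fin N) ℝ) : ℝ := ⨆ j, ∑ i, M i j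

lemma kkn_col {N : ℕ} (M : Matrix (Fin N) (Fin N) ℝ) (j : Fin N) : ∑ i, M i j ≤ kkn M :=
  Finite.le_ciSup (fun j => ∑ i, M i j) j

lemma kkn_nonneg {N : ℕ} (M : Matrix (Fin N) (Fin N) ℝ) (hM : ∀ i j, 0 ≤ M i j) : 0 ≤ kkn M :=
  Real.iSup_nonneg fun j => Finset.sum_nonneg fun i _ => hM i j

lemma kkn_mul {N : ℕ} (hN : 2 ≤ N) (P Q : Matrix (Fin N) (Fin N) ℝ) (hP : ∀ i j, 0 ≤ P i j)
    (hQ : ∀ i j, 0 ≤ Q i j) : kkn (P * Q) ≤ kkn P * kkn Q := by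
  haveI : Nonempty (Fin N) := ⟨⟨0, by omega⟩⟩
  refine ciSup_le fun j => ?_
  simp only [Matrix.mul_apply]
  rw [Finset.sum_comm]
  calc ∑ k, ∑ i, P i k * Q k j = ∑ k, (∑ i, P i k) * Q k j := by simp [Finset.sum_mul]
    _ ≤ ∑ k, kkn P * Q k j := Finset.sum_le_sum fun k _ =>
        mul_le_mul_of_nonneg_right (kkn_col P k) (hQ k j)
    _ = kkn P * ∑ k, Q k j := by rw [Finset.mul_sum]
    _ ≤ _ := mul_le_mul_of_nonneg_left (kkn_col Q j) (kkn_nonneg P hP)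

lemma kkn_le_eop {N : ℕ} (hN : 2 ≤ N) (M : Matrix (Fin N) (Fin N) ℝ) : kkn M ≤ N * eopNorm M := by
  haveI : Nonempty (Fin N) := ⟨⟨0, by omega⟩⟩
  refine ciSup_le fun j => ?_
  calc ∑ i, M i j ≤ ∑ i : Fin N, eopNorm M :=
        Finset.sum_le_sum fun i _ => (le_abs_self _).trans (kk_entry_le M i j)
    _ = _ := by simp

lemma kk_eop_le {N : ℕ} (M : Matrix (Fin N) (Fin N) ℝ) (hM : ∀ i j, 0 ≤ M i j) :
    eopNorm M ≤ N * kkn M := by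
  refine csSup_le ⟨_, 0, by simp [enorm'], rfl⟩ ?_
  rintro c ⟨u, hu, rfl⟩
  refine (kk_bdd M u hu).trans ?_
  rw [Finset.sum_comm]
  calc ∑ j, ∑ i, |M i j| = ∑ j, ∑ i, M i j := by simp [abs_of_nonneg (hM _ _)]
    _ ≤ ∑ j : Fin N, kkn M := Finset.sum_le_sum fun j _ => kkn_col M j
    _ = _ := by simp

lemma kk_meas_int {Ω : Type*} [MeasurableSpace Ω] (F : ℝ × Ω → ℝ) (hF : Measurable F) :
    Measurable fun p : ℝ × Ω => ∫ s in (0:ℝ)..p.1, F (s, p.2) := by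
  have h1 : ∀ a b : ℝ × Ω → ℝ, Measurable a → Measurable b →
      Measurable fun p : ℝ × Ω => ∫ s in Set.Ioc (a p) (b p), F (s, p.2) := by
    intro a b ha hb
    have e : (fun p : ℝ × Ω => ∫ s in Set.Ioc (a p) (b p), F (s, p.2))
        = fun p => ∫ s, {q : (ℝ × Ω) × ℝ | a q.1 < q.2 ∧ q.2 ≤ b q.1}.indicator
            (fun q => F (q.2, q.1.2)) (p, s) := by
      ext p
      rw [← integral_indicator measurableSet_Ioc]
      congr 1
    rw [e]
    refine (StronglyMeasurable.integral_prod_right' ?_).measurable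
    refine (Measurable.indicator (hF.comp (by fun_prop)) ?_).stronglyMeasurable
    exact (measurableSet_lt (ha.comp measurable_fst) measurable_snd).inter
      (measurableSet_le measurable_snd (hb.comp measurable_fst))
  simp only [intervalIntegral]
  exact (h1 _ _ measurable_const measurable_fst).sub (h1 _ _ measurable_fst measurable_const)

lemma kkPic_meas {N : ℕ} {Ω : Type*} [MeasurableSpace Ω] (M : Ω → ℝ → Matrix (Fin N) (Fin N) ℝ)
    (hM : ∀ i j, Measurable fun p : ℝ × Ω => M p.2 p.1 i j) (u0 : Fin N → ℝ) (n : ℕ) (i : Fin N) :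
    Measurable fun p : ℝ × Ω => kkPic (M p.2) u0 n p.1 i := by
  induction n generalizing i with
  | zero => exact measurable_const
  | succ n ih =>
    exact measurable_const.add (kk_meas_int (fun p => ∑ j, M p.2 p.1 i j * kkPic (M p.2) u0 n p.1 j)
      (Finset.measurable_fun_sum _ fun j _ => (hM i j).mul (ih j)))


section flow
variable {N : ℕ} {Ω : Type*} [MeasurableSpace Ω]

lemma kk_Mint (θ : ℝ → Ω → Ω)
    (hθjm : Measurable fun p : ℝ × Ω => θ p.1 p.2)
    (A : Ω → Matrix (Fin N) (Fin N) ℝ)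
    (hAmeas : ∀ i j, Measurable fun ω => A ω i j)
    (hAloc : ∀ ω, ∀ a c : ℝ,
      IntervalIntegrable (fun t => eopNorm (A (θ t ω))) volume a c) (ω : Ω) (i j : Fin N) (a b : ℝ) :
    IntervalIntegrable (fun s => A (θ s ω) i j) volume a b := by
  refine (hAloc ω a b).mono_fun' ?_ (Eventually.of_forall fun s => kk_entry_le _ i j)
  exact ((hAmeas i j).comp (hθjm.comp measurable_prodMk_right)).aestronglyMeasurable

lemma kk_comp (M : ℝ → Matrix (Fin N) (Fin N) ℝ)
    (hM : ∀ i j a b, IntervalIntegrable (fun s => M s i j) volume a b)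
    (u0 : Fin N → ℝ) (u : ℝ → Fin N → ℝ) (hu : Continuous u)
    (hue : ∀ t, u t = u0 + ∫ s in (0:ℝ)..t, (M s).mulVec (u s)) (t : ℝ) (i : Fin N) :
    u t i = u0 i + ∫ s in (0:ℝ)..t, ∑ j, M s i j * u s j := by
  have hrow := fun i => kk_int_row M hM u (fun i => (continuous_apply i).comp hu) i 0 t
  have hii : IntervalIntegrable (fun s => (M s).mulVec (u s)) volume 0 t := by
    constructor
    · exact Integrable.of_eval fun i => (hrow i).1
    · exact Integrable.of_eval fun i => (hrow i).2
  have := (ContinuousLinearMap.proj (R := ℝ) (φ := fun _ : Fin N => ℝ) i).intervalIntegral_comp_comm hii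
  conv_lhs => rw [hue t]
  rw [Pi.add_apply]
  congr 1
  exact this.symm

end flow

lemma kk_cocycle {N : ℕ} {Ω : Type*} (θ : ℝ → Ω → Ω)
    (hθadd : ∀ s t : ℝ, θ (s + t) = θ s ∘ θ t)
    (A : Ω → Matrix (Fin N) (Fin N) ℝ)
    (hM : ∀ ω i j a b, IntervalIntegrable (fun s => A (θ s ω) i j) volume a b)
    (U : Ω → ℝ → Matrix (Fin N) (Fin N) ℝ)
    (hUcont : ∀ ω (u0 : Fin N → ℝ), Continuous fun t : ℝ => (U ω t).mulVec u0)
    (hUc : ∀ ω (u0 : Fin N → ℝ) (t : ℝ) (i : Fin N),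
      (U ω t).mulVec u0 i = u0 i + ∫ s in (0:ℝ)..t, ∑ j, A (θ s ω) i j * (U ω s).mulVec u0 j)
    (ω : Ω) (s t : ℝ) (ht : 0 ≤ t) : U ω (s + t) = U (θ s ω) t * U ω s := by
  have key : ∀ u0 : Fin N → ℝ, (U ω (s + t)).mulVec u0 = (U (θ s ω) t * U ω s).mulVec u0 := by
    intro u0
    rw [← Matrix.mulVec_mulVec]
    ext i
    have hrow := fun i a b => kk_int_row (fun s => A (θ s ω)) (hM ω) (fun s => (U ω s).mulVec u0)
      (fun i => (continuous_apply i).comp (hUcont ω u0)) i a b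
    refine kk_unique (fun r => A (θ r (θ s ω))) (hM (θ s ω)) ((U ω s).mulVec u0)
      (fun t => (U ω (s + t)).mulVec u0) (fun t => (U (θ s ω) t).mulVec ((U ω s).mulVec u0))
      (fun i => (continuous_apply i).comp ((hUcont ω u0).comp (continuous_const.add continuous_id)))
      (fun i => (continuous_apply i).comp (hUcont _ _)) ?_ (fun t _ i => hUc _ _ t i) t ht i
    intro t _ i
    have e1 : ∀ r, θ r (θ s ω) = θ (s + r) ω := fun r => by rw [add_comm, hθadd]; rfl
    simp only [e1]
    have := intervalIntegral.integral_comp_add_left (a := 0) (b := t)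
      (fun r => ∑ j, A (θ r ω) i j * (U ω r).mulVec u0 j) s
    rw [this, add_zero]
    rw [hUc ω u0 (s + t) i, hUc ω u0 s i, add_assoc, intervalIntegral.integral_add_adjacent_intervals]
    · exact hrow i _ _
    · exact hrow i _ _
  ext i j
  have := congrFun (key (Pi.single j 1)) i
  simpa [Matrix.mulVec_single_one] using this

lemma kk_prod_low {N : ℕ} {Ω : Type*} (θ : ℝ → Ω → Ω)
    (U : Ω → ℝ → Matrix (Fin N) (Fin N) ℝ) (hU0 : ∀ ω, U ω 0 = 1)
    (hcoc : ∀ ω s t, 0 ≤ s → 0 ≤ t → U ω (s + t) = U (θ s ω) t * U ω s)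
    (hpos : ∀ ω t, 0 ≤ t → ∀ i j, 0 ≤ U ω t i j)
    (ebar : Fin N → ℝ) (ν : Ω → ℝ) (hνpos : ∀ ω, 0 < ν ω)
    (hstrong : ∀ ω i, ν ω * ebar i ≤ (U ω 1).mulVec ebar i) (n : ℕ) (ω : Ω) (i : Fin N) :
    (∏ k ∈ Finset.range n, ν (θ k ω)) * ebar i ≤ (U ω n).mulVec ebar i := by
  induction n generalizing i with
  | zero => simp [hU0]
  | succ n ih =>
    push_cast
    rw [hcoc ω n 1 (by positivity) zero_le_one, ← Matrix.mulVec_mulVec, Finset.prod_range_succ]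
    calc _ = (∏ k ∈ Finset.range n, ν (θ k ω)) * (ν (θ n ω) * ebar i) := by ring
      _ ≤ (∏ k ∈ Finset.range n, ν (θ k ω)) * (U (θ n ω) 1).mulVec ebar i :=
        mul_le_mul_of_nonneg_left (hstrong _ i) (Finset.prod_nonneg fun k _ => (hνpos _).le)
      _ = ∑ j, U (θ n ω) 1 i j * ((∏ k ∈ Finset.range n, ν (θ k ω)) * ebar j) := by
        simp only [Matrix.mulVec, dotProduct, Finset.mul_sum]
        exact Finset.sum_congr rfl fun j _ => by ring
      _ ≤ _ := by
        exact Finset.sum_le_sum fun j _ => mul_le_mul_of_nonneg_left (ih j) (hpos _ _ zero_le_one i j)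

lemma kk_kkn_low {N : ℕ} (M : Matrix (Fin N) (Fin N) ℝ)
    (ebar : Fin N → ℝ) (hebar : ∀ i, 0 ≤ ebar i) (hebarn : enorm' ebar = 1) (c : ℝ)
    (h : ∀ i, c * ebar i ≤ M.mulVec ebar i) : c ≤ kkn M := by
  have hs : 0 < ∑ i, ebar i := by
    have := kk_enorm_le ebar
    rw [hebarn] at this
    simp only [abs_of_nonneg (hebar _)] at this
    linarith
  have h1 : c * ∑ i, ebar i ≤ kkn M * ∑ i, ebar i := by
    rw [Finset.mul_sum]
    calc _ ≤ ∑ i, M.mulVec ebar i := Finset.sum_le_sum fun i _ => h i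
      _ = ∑ j, (∑ i, M i j) * ebar j := by
        simp only [Matrix.mulVec, dotProduct]
        rw [Finset.sum_comm]
        simp [Finset.sum_mul]
      _ ≤ ∑ j, kkn M * ebar j := Finset.sum_le_sum fun j _ =>
        mul_le_mul_of_nonneg_right (kkn_col M j) (hebar j)
      _ = _ := by rw [Finset.mul_sum]
  exact le_of_mul_le_mul_right h1 hs


lemma kk_birk {Ω : Type*} [MeasurableSpace Ω] (ℙ : Measure Ω)
    (θ : ℝ → Ω → Ω) (hθmp : ∀ t, MeasurePreserving (θ t) ℙ ℙ)
    (φ : Ω → ℝ) (hφ : Integrable φ ℙ) (n : ℕ) :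
    Integrable (fun ω => ∑ k ∈ Finset.range n, φ (θ k ω)) ℙ ∧
      ∫ ω, ∑ k ∈ Finset.range n, φ (θ k ω) ∂ℙ = n * ∫ ω, φ ω ∂ℙ := by
  have h1 : ∀ k : ℕ, Integrable (fun ω => φ (θ k ω)) ℙ := fun k => (hθmp k).integrable_comp_of_integrable hφ
  have h2 : ∀ k : ℕ, ∫ ω, φ (θ k ω) ∂ℙ = ∫ ω, φ ω ∂ℙ := fun k => by
    have := integral_map (μ := ℙ) (hθmp k).measurable.aemeasurable (f := φ) (by
      rw [(hθmp k).map_eq]; exact hφ.aestronglyMeasurable)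
    rw [(hθmp k).map_eq] at this
    exact this.symm
  refine ⟨integrable_finsetSum _ fun k _ => h1 k, ?_⟩
  rw [integral_finsetSum _ fun k _ => h1 k]
  simp [h2]

lemma kk_absfinal {Ω : Type*} [MeasurableSpace Ω] (ℙ : Measure Ω) [IsProbabilityMeasure ℙ]
    (θ : ℝ → Ω → Ω) (hθ0 : θ 0 = id)
    (hθadd : ∀ s t : ℝ, θ (s + t) = θ s ∘ θ t)
    (hθmp : ∀ t, MeasurePreserving (θ t) ℙ ℙ)
    (hθerg : ∀ F : Set Ω, MeasurableSet F → (∀ t, θ t ⁻¹' F = F) →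
      ℙ F = 0 ∨ ℙ F = 1)
    (κ Q : ℝ → Ω → ℝ) (φ : Ω → ℝ)
    (hκpos : ∀ t, 0 ≤ t → ∀ ω, 0 < κ t ω)
    (hκsub : ∀ s t, 0 ≤ s → 0 ≤ t → ∀ ω, κ (s + t) ω ≤ κ t (θ s ω) * κ s ω)
    (hκQ : ∀ t, 0 ≤ t → ∀ ω, κ t ω ≤ Real.exp (Q t ω))
    (hκm : ∀ n : ℕ, Measurable (κ n))
    (hQm : ∀ n : ℕ, Measurable (Q n))
    (hQadd : ∀ s t, 0 ≤ s → 0 ≤ t → ∀ ω, Q (s + t) ω = Q s ω + Q t (θ s ω))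
    (hQ0 : ∀ t, 0 ≤ t → ∀ ω, 0 ≤ Q t ω)
    (hQ1 : Integrable (Q 1) ℙ) (hφ : Integrable φ ℙ)
    (hlow : ∀ (n : ℕ) ω, -(∑ k ∈ Finset.range n, φ (θ k ω)) ≤ Real.log (κ n ω)) :
    ∃ lam : ℝ, ∀ᵐ ω ∂ℙ,
      Tendsto (fun t : ℝ => t⁻¹ * Real.log (κ t ω)) atTop (nhds lam) := by
  have hQn : ∀ (n : ℕ) ω, Q n ω = ∑ k ∈ Finset.range n, Q 1 (θ k ω) := by
    intro n ω
    induction n with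
    | zero =>
      have := hQadd 0 0 le_rfl le_rfl ω
      rw [hθ0] at this
      simp at this ⊢; exact this
    | succ n ih =>
      push_cast
      rw [hQadd n 1 (by positivity) zero_le_one, ih, Finset.sum_range_succ]
  have hQi : ∀ n : ℕ, Integrable (Q n) ℙ := fun n => by
    have := (kk_birk ℙ θ hθmp _ hQ1 n).1
    simpa only [← hQn] using this
  have hQI : ∀ n : ℕ, ∫ ω, Q n ω ∂ℙ = n * ∫ ω, Q 1 ω ∂ℙ := fun n => by
    have := (kk_birk ℙ θ hθmp _ hQ1 n).2
    simpa only [← hQn] using this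
  obtain ⟨l1, h1⟩ := kk_flow ℙ θ hθ0 hθadd hθmp hθerg (fun t ω => -Q t ω)
    (fun t ht ω => by linarith [hQ0 t ht ω])
    (fun s t hs ht ω => by rw [hQadd s t hs ht]; linarith)
    (fun n => (hQm n).neg) (fun n => (hQi n).neg) (∫ ω, Q 1 ω ∂ℙ) (fun n => by
      rw [integral_neg, hQI])
  have hlogle : ∀ t, 0 ≤ t → ∀ ω, Real.log (κ t ω) ≤ Q t ω := fun t ht ω =>
    (Real.log_le_iff_le_exp (hκpos t ht ω)).2 (hκQ t ht ω)
  have hXm : ∀ n : ℕ, Measurable fun ω => Real.log (κ n ω) - Q n ω := fun n =>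
    (Real.measurable_log.comp (hκm n)).sub (hQm n)
  have hXi : ∀ n : ℕ, Integrable (fun ω => Real.log (κ n ω) - Q n ω) ℙ := fun n => by
    refine Integrable.mono' ((kk_birk ℙ θ hθmp _ hφ n).1.add (hQi n)) (hXm n).aestronglyMeasurable
      (Eventually.of_forall fun ω => ?_)
    have a := hlow n ω
    have b := hlogle n (by positivity) ω
    rw [Real.norm_eq_abs, abs_of_nonpos (by linarith)]
    simp only [Pi.add_apply]
    linarith
  obtain ⟨l2, h2⟩ := kk_flow ℙ θ hθ0 hθadd hθmp hθerg (fun t ω => Real.log (κ t ω) - Q t ω)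
    (fun t ht ω => by linarith [hlogle t ht ω])
    (fun s t hs ht ω => by
      rw [hQadd s t hs ht]
      have := Real.log_le_log (hκpos (s + t) (by positivity) ω) (hκsub s t hs ht ω)
      rw [Real.log_mul (hκpos t ht _).ne' (hκpos s hs _).ne'] at this
      linarith)
    hXm hXi ((∫ ω, φ ω ∂ℙ) + ∫ ω, Q 1 ω ∂ℙ) (fun n => by
      rw [mul_add, ← (kk_birk ℙ θ hθmp _ hφ n).2, ← hQI, ← integral_add (kk_birk ℙ θ hθmp _ hφ n).1 (hQi n),
        ← integral_neg]
      refine integral_mono ((kk_birk ℙ θ hθmp _ hφ n).1.add (hQi n)).neg (hXi n) fun ω => ?_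
      have a := hlow n ω
      simp only [Pi.neg_apply, Pi.add_apply]
      linarith)
  refine ⟨l2 - l1, ?_⟩
  filter_upwards [h1, h2] with ω a b
  refine (b.sub a).congr fun t => ?_
  ring

lemma kk_cmp {N : ℕ} (hN : 2 ≤ N) (M : ℝ → Matrix (Fin N) (Fin N) ℝ) (hM : ∀ t, 0 ≤ t → ∀ i j, 0 ≤ M t i j)
    (hp : ∀ t, 0 ≤ t → 0 < kkn (M t)) (lam : ℝ)
    (h : Tendsto (fun t : ℝ => t⁻¹ * Real.log (kkn (M t))) atTop (nhds lam)) :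
    Tendsto (fun t : ℝ => t⁻¹ * Real.log (eopNorm (M t))) atTop (nhds lam) := by
  have hN' : (0:ℝ) < N := by exact_mod_cast (by omega : 0 < N)
  have hc : Tendsto (fun t : ℝ => t⁻¹ * Real.log N) atTop (nhds 0) := by
    simpa using tendsto_inv_atTop_zero.mul_const (Real.log N)
  have ha := h.sub hc
  have hb := h.add hc
  rw [sub_zero] at ha
  rw [add_zero] at hb
  refine tendsto_of_tendsto_of_tendsto_of_le_of_le' ha hb ?_ ?_
  · filter_upwards [eventually_ge_atTop 0] with t ht
    rw [← mul_sub]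
    refine mul_le_mul_of_nonneg_left ?_ (inv_nonneg.2 ht)
    have h1 := kkn_le_eop hN (M t)
    have hpe : 0 < eopNorm (M t) := by
      by_contra hh
      push Not at hh
      have := hp t ht
      nlinarith
    have := Real.log_le_log (hp t ht) h1
    rw [Real.log_mul hN'.ne' hpe.ne'] at this
    linarith
  · filter_upwards [eventually_ge_atTop 0] with t ht
    rw [← mul_add]
    refine mul_le_mul_of_nonneg_left ?_ (inv_nonneg.2 ht)
    have h1 := kkn_le_eop hN (M t)
    have hpe : 0 < eopNorm (M t) := by
      by_contra hh
      push Not at hh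
      have := hp t ht
      nlinarith
    have := Real.log_le_log hpe (kk_eop_le (M t) (hM t ht))
    rw [Real.log_mul hN'.ne' (hp t ht).ne'] at this
    linarith

lemma kk_Q1 {Ω : Type*} [MeasurableSpace Ω] (ℙ : Measure Ω) [IsProbabilityMeasure ℙ]
    (θ : ℝ → Ω → Ω) (hθjm : Measurable fun p : ℝ × Ω => θ p.1 p.2)
    (hθmp : ∀ t, MeasurePreserving (θ t) ℙ ℙ) (b : Ω → ℝ) (hbm : Measurable b) (hb : Integrable b ℙ) :
    Integrable (fun ω => ∫ s in (0:ℝ)..1, b (θ s ω)) ℙ := by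
  have hm : Measurable fun p : ℝ × Ω => b (θ p.1 p.2) := hbm.comp hθjm
  have hI : Integrable (fun p : ℝ × Ω => b (θ p.1 p.2)) ((volume.restrict (Set.Ioc (0:ℝ) 1)).prod ℙ) := by
    rw [integrable_prod_iff hm.aestronglyMeasurable]
    refine ⟨Eventually.of_forall fun s => (hθmp s).integrable_comp_of_integrable hb, ?_⟩
    have h2 : ∀ s, ∫ ω, ‖b (θ s ω)‖ ∂ℙ = ∫ ω, ‖b ω‖ ∂ℙ := fun s => by
      have := integral_map (μ := ℙ) (hθmp s).measurable.aemeasurable (f := fun ω => ‖b ω‖)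
        hbm.norm.aestronglyMeasurable
      rw [(hθmp s).map_eq] at this
      exact this.symm
    simp only [h2]
    exact integrable_const _
  simp only [intervalIntegral.integral_of_le zero_le_one]
  exact hI.integral_prod_right


/-- Finiteness of the generalized principal Lyapunov exponent for a
random cooperative linear ODE system under the strong positivity condition (B5):
the a.s. constant limit `λ̃₁ = lim (1/t) ln‖U_ω(t)‖` is a (finite) real number. -/
theorem stmt_18 {N : ℕ} (hN : 2 ≤ N)
    {Ω : Type*} [MeasurableSpace Ω] (ℙ : Measure Ω) [IsProbabilityMeasure ℙ]
    [ℙ.IsComplete]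
    (θ : ℝ → Ω → Ω) (hθ0 : θ 0 = id)
    (hθadd : ∀ s t : ℝ, θ (s + t) = θ s ∘ θ t)
    (hθjm : Measurable fun p : ℝ × Ω => θ p.1 p.2)
    (hθmp : ∀ t, MeasurePreserving (θ t) ℙ ℙ)
    (hθerg : ∀ F : Set Ω, MeasurableSet F → (∀ t, θ t ⁻¹' F = F) →
      ℙ F = 0 ∨ ℙ F = 1)
    (A : Ω → Matrix (Fin N) (Fin N) ℝ)
    (hAmeas : ∀ i j, Measurable fun ω => A ω i j)
    (hAloc : ∀ ω, ∀ a c : ℝ,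
      IntervalIntegrable (fun t => eopNorm (A (θ t ω))) volume a c)
    (U : Ω → ℝ → Matrix (Fin N) (Fin N) ℝ)
    (hUcont : ∀ ω (u0 : Fin N → ℝ), Continuous fun t : ℝ => (U ω t).mulVec u0)
    (hUeq : ∀ ω (u0 : Fin N → ℝ) (t : ℝ),
      (U ω t).mulVec u0 = u0 + ∫ s in (0:ℝ)..t, (A (θ s ω)).mulVec ((U ω s).mulVec u0))
    -- (O1) cooperativity
    (hO1 : ∀ ω (i j : Fin N), i ≠ j → 0 ≤ A ω i j)
    -- (O2) integrability
    (hO2 : Integrable (fun ω => ⨆ i, ⨆ j, A ω i j) ℙ)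
    -- strong positivity in one direction (B5)
    (ebar : Fin N → ℝ) (hebar : ∀ i, 0 ≤ ebar i) (hebarn : enorm' ebar = 1)
    (ν : Ω → ℝ) (hνmeas : Measurable ν) (hνpos : ∀ ω, 0 < ν ω)
    (hνint : Integrable (fun ω => lnminus (ν ω)) ℙ)
    (hstrong : ∀ ω i, ν ω * ebar i ≤ (U ω 1).mulVec ebar i) :
    ∃ lam : ℝ, ∀ᵐ ω ∂ℙ,
      Tendsto (fun t : ℝ => t⁻¹ * Real.log (eopNorm (U ω t))) atTop (nhds lam) := by
  have hne : Nonempty (Fin N) := ⟨⟨0, by omega⟩⟩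
  have hN' : (0:ℝ) < N := by exact_mod_cast (by omega : 0 < N)
  have hM := kk_Mint θ hθjm A hAmeas hAloc
  have hUc : ∀ ω (u0 : Fin N → ℝ) (t : ℝ) (i : Fin N),
      (U ω t).mulVec u0 i = u0 i + ∫ s in (0:ℝ)..t, ∑ j, A (θ s ω) i j * (U ω s).mulVec u0 j :=
    fun ω u0 t i => kk_comp (fun s => A (θ s ω)) (hM ω) u0 _ (hUcont ω u0) (hUeq ω u0) t i
  have hUci : ∀ ω (u0 : Fin N → ℝ) i, Continuous fun t : ℝ => (U ω t).mulVec u0 i := fun ω u0 i =>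
    (continuous_apply i).comp (hUcont ω u0)
  have hcol : ∀ ω t i j, (U ω t).mulVec (Pi.single j 1) i = U ω t i j := fun ω t i j => by
    rw [Matrix.mulVec_single_one]; rfl
  have hpos : ∀ ω t, 0 ≤ t → ∀ i j, 0 ≤ U ω t i j := by
    intro ω t ht i j
    rw [← hcol]
    refine kk_pos (fun s => A (θ s ω)) (hM ω) (fun s i j hij => hO1 _ i j hij) (Pi.single j 1) ?_
      (fun t => (U ω t).mulVec (Pi.single j 1)) (hUci ω _) (hUc ω _) t ht i
    intro i
    by_cases h : i = j
    · subst h; simp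
    · simp [h]
  have hcoc : ∀ ω s t, 0 ≤ s → 0 ≤ t → U ω (s + t) = U (θ s ω) t * U ω s := fun ω s t _ ht =>
    kk_cocycle θ hθadd A hM U hUcont hUc ω s t ht
  have hU0 : ∀ ω, U ω 0 = 1 := by
    intro ω
    ext i j
    rw [← hcol, hUc]
    simp [Matrix.one_apply, Pi.single_apply]
  -- the bound
  obtain ⟨b, hbd⟩ : ∃ b : Ω → ℝ, b = fun ω => max (⨆ i, ⨆ j, A ω i j) 0 := ⟨_, rfl⟩
  have hb0 : ∀ ω, 0 ≤ b ω := fun ω => by rw [hbd]; exact le_max_right _ _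
  have hAb : ∀ ω i j, A ω i j ≤ b ω := fun ω i j => by
    rw [hbd]
    exact le_trans (le_trans (Finite.le_ciSup (fun j => A ω i j) j)
      (Finite.le_ciSup (fun i => ⨆ j, A ω i j) i)) (le_max_left _ _)
  have hbm : Measurable b := by
    rw [hbd]
    exact (Measurable.iSup fun i => Measurable.iSup fun j => hAmeas i j).max measurable_const
  have hbi : Integrable b ℙ := by
    rw [hbd]; exact hO2.pos_part
  have hbe : ∀ ω, b ω ≤ eopNorm (A ω) := fun ω => by
    rw [hbd]
    have h1 : ∀ i j, A ω i j ≤ eopNorm (A ω) := fun i j => (le_abs_self _).trans (kk_entry_le _ i j)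
    have h2 : 0 ≤ eopNorm (A ω) := (abs_nonneg _).trans (kk_entry_le (A ω) hne.some hne.some)
    exact max_le (ciSup_le fun i => ciSup_le fun j => h1 i j) h2
  have hbl : ∀ ω a c, IntervalIntegrable (fun s => b (θ s ω)) volume a c := by
    intro ω a c
    refine (hAloc ω a c).mono_fun' ?_ (Eventually.of_forall fun s => ?_)
    · exact (hbm.comp (hθjm.comp measurable_prodMk_right)).aestronglyMeasurable
    · simp only [Real.norm_eq_abs]
      rw [abs_of_nonneg (hb0 _)]
      exact hbe _
  obtain ⟨Q, hQd⟩ : ∃ Q : ℝ → Ω → ℝ, Q = fun t ω => ∫ s in (0:ℝ)..t, N * b (θ s ω) := ⟨_, rfl⟩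
  have hgrow : ∀ t, 0 ≤ t → ∀ ω, kkn (U ω t) ≤ Real.exp (Q t ω) := by
    intro t ht ω
    refine ciSup_le fun j => ?_
    have := kk_growth (fun s => A (θ s ω)) (hM ω) (fun s => b (θ s ω)) (hbl ω) (fun s => hb0 _)
      (fun s i j => hAb _ i j) (Pi.single j 1) (fun t => (U ω t).mulVec (Pi.single j 1)) (hUci ω _)
      (fun t ht i => by rw [hcol]; exact hpos ω t ht i j) (hUc ω _) t ht
    simp only [hcol] at this
    rw [hQd]
    simpa using this
  have hUm : ∀ t, 0 ≤ t → ∀ i j, Measurable fun ω => U ω t i j := by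
    intro t ht i j
    refine measurable_of_tendsto_metrizable
      (f := fun n ω => kkPic (fun s => A (θ s ω)) (Pi.single j 1) n t i) (fun n => ?_)
      (tendsto_pi_nhds.2 fun ω => ?_)
    · exact (kkPic_meas (fun ω s => A (θ s ω)) (fun i j => (hAmeas i j).comp hθjm) (Pi.single j 1) n i).comp
        (measurable_prodMk_left (x := t))
    · rw [← hcol]
      exact kkPic_tendsto (fun s => A (θ s ω)) (hM ω) (Pi.single j 1)
        (fun t => (U ω t).mulVec (Pi.single j 1)) (hUci ω _) (hUc ω _) t ht i
  have hprod : ∀ (n : ℕ) ω, ∏ k ∈ Finset.range n, ν (θ k ω) ≤ kkn (U ω n) := fun n ω =>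
    kk_kkn_low _ ebar hebar hebarn _ fun i =>
      kk_prod_low θ U hU0 hcoc hpos ebar ν hνpos hstrong n ω i
  have hpp : ∀ (n : ℕ) ω, 0 < ∏ k ∈ Finset.range n, ν (θ k ω) := fun n ω =>
    Finset.prod_pos fun k _ => hνpos _
  have hsub : ∀ s t, 0 ≤ s → 0 ≤ t → ∀ ω, kkn (U ω (s + t)) ≤ kkn (U (θ s ω) t) * kkn (U ω s) := by
    intro s t hs ht ω
    rw [hcoc ω s t hs ht]
    exact kkn_mul hN _ _ (hpos _ t ht) (hpos _ s hs)
  have hkpos : ∀ t, 0 ≤ t → ∀ ω, 0 < kkn (U ω t) := by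
    intro t ht ω
    obtain ⟨n, hn⟩ := exists_nat_ge t
    have h1 := (hpp n ω).trans_le (hprod n ω)
    have h2 := hsub t (n - t) ht (by linarith) ω
    rw [add_sub_cancel] at h2
    refine (kkn_nonneg _ (hpos ω t ht)).lt_of_ne fun h => ?_
    rw [← h, mul_zero] at h2
    linarith
  obtain ⟨lam, hlam⟩ := kk_absfinal ℙ θ hθ0 hθadd hθmp hθerg (fun t ω => kkn (U ω t)) Q
    (fun ω => lnminus (ν ω)) hkpos hsub hgrow
    (fun n => Measurable.iSup fun j => Finset.measurable_fun_sum _ fun i _ => hUm n (by positivity) i j)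
    (fun n => by
      rw [hQd]
      exact (kk_meas_int (fun p : ℝ × Ω => N * b (θ p.1 p.2)) ((hbm.comp hθjm).const_mul _)).comp
        (measurable_prodMk_left (x := (n : ℝ))))
    (fun s t hs ht ω => by
      rw [hQd]
      have e1 : ∀ r, θ r (θ s ω) = θ (s + r) ω := fun r => by rw [add_comm, hθadd]; rfl
      simp only [e1]
      have := intervalIntegral.integral_comp_add_left (a := 0) (b := t)
        (fun r => N * b (θ r ω)) s
      rw [this, add_zero, intervalIntegral.integral_add_adjacent_intervals] <;>
      exact (hbl ω _ _).const_mul _)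
    (fun t ht ω => by
      rw [hQd]
      exact intervalIntegral.integral_nonneg ht fun s _ => mul_nonneg hN'.le (hb0 _))
    (by
      rw [hQd]
      exact kk_Q1 ℙ θ hθjm hθmp (fun ω => N * b ω) (hbm.const_mul _) (hbi.const_mul _))
    hνint
    (fun n ω => by
      refine le_trans ?_ (Real.log_le_log (hpp n ω) (hprod n ω))
      rw [Real.log_prod (fun k _ => (hνpos _).ne'), ← Finset.sum_neg_distrib]
      refine Finset.sum_le_sum fun k _ => ?_
      have := le_max_left (-Real.log (ν (θ k ω))) 0
      unfold lnminus
      linarith)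
  refine ⟨lam, ?_⟩
  filter_upwards [hlam] with ω hω
  exact kk_cmp hN (fun t => U ω t) (hpos ω) (fun t ht => hkpos t ht ω) lam hω
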